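/- Let N ∈ {3,4,5} and ℓ ∈ (−1,1). Then the momentum vector ∫_{ℝ^N} ∇_x W_ℓ(0,x)·∂_t W_ℓ(0,x) dx ∈ ℝ^N equals −(ℓ/√(1−ℓ²))·E(W,0)·e₁, where e₁ = (1,0,…,0); equivalently it equals −ℓ·E(W_ℓ(0,·),∂_t W_ℓ(0,·))·e₁. -/

import Mathlib

open MeasureTheory Metric Filter Set

noncomputable section

/-- The ground state `W(x) = (1 + |x|²/(N(N-2)))^(-(N-2)/2)`. -/
def W (N : ℕ) (x : EuclideanSpace ℝ (Fin N)) : ℝ :=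
  (1 + ‖x‖ ^ 2 / ((N : ℝ) * ((N : ℝ) - 2))) ^ (-(((N : ℝ) - 2) / 2))

/-- The energy `E(v₀,v₁)`. -/
def energy (N : ℕ) (v₀ v₁ : EuclideanSpace ℝ (Fin N) → ℝ) : ℝ :=
  (1 / 2) * (∫ x, v₁ x ^ 2)
    + (1 / 2) * (∫ x, ‖gradient v₀ x‖ ^ 2)
    - ((N : ℝ) - 2) / (2 * (N : ℝ)) * (∫ x, |v₀ x| ^ (2 * (N : ℝ) / ((N : ℝ) - 2)))

/-- The first coordinate of a point of `ℝ^N`. -/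
def firstCoord {N : ℕ} (x : EuclideanSpace ℝ (Fin N)) : ℝ :=
  if h : 0 < N then x ⟨0, h⟩ else 0

/-- The Lorentz-transformed ground state `W_ℓ(t,x)`; the sum `x₂² + ⋯ + x_N²` is written
as `‖x‖² - x₁²`. -/
def Wl (N : ℕ) (ℓ : ℝ) (t : ℝ) (x : EuclideanSpace ℝ (Fin N)) : ℝ :=
  (1 + (firstCoord x - t * ℓ) ^ 2 / ((N : ℝ) * ((N : ℝ) - 2) * (1 - ℓ ^ 2))
     + (‖x‖ ^ 2 - firstCoord x ^ 2) / ((N : ℝ) * ((N : ℝ) - 2))) ^ (-(((N : ℝ) - 2) / 2))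

/-- The time derivative `∂ₜ W_ℓ(t,x)`. -/
def dtWl (N : ℕ) (ℓ : ℝ) (t : ℝ) (x : EuclideanSpace ℝ (Fin N)) : ℝ :=
  deriv (fun s => Wl N ℓ s x) t

/-- The second partial derivative `∂²f/∂xⱼ²` at `x`. -/
def d2 {N : ℕ} (f : EuclideanSpace ℝ (Fin N) → ℝ) (j : Fin N)
    (x : EuclideanSpace ℝ (Fin N)) : ℝ :=
  fderiv ℝ (fun y => fderiv ℝ f y (EuclideanSpace.single j 1)) x (EuclideanSpace.single j 1)

/-!
At time `0` the wave `W_ℓ` is the profile `W ∘ Λ`, where `Λ` stretches the direction `e = e₁` by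
the Lorentz factor `γ = (1 - ℓ²)^(-1/2)`, and it travels with velocity `ℓ e`, so
`∂ₜW_ℓ = -ℓ ⟪e, ∇W_ℓ⟫`. Since `Λ` is self-adjoint with determinant `γ` and `∇(W ∘ Λ) = Λ (∇W ∘ Λ)`,
momentum and energy reduce to integrals of quadratic expressions in `∇W`. The field `∇W` commutes
with all linear isometries, which forces `∫ ⟪e, ∇W⟫ ∇W = (∫ ‖∇W‖² / N) e`. Finally the Pohozaev
identity `∫ |W|^(2N/(N-2)) = ∫ ‖∇W‖²`, the vanishing of the integral of a radial divergence, gives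
`E(W, 0) = ∫ ‖∇W‖² / N`: the momentum is `-ℓ γ E(W, 0) e` and the energy of the boosted wave is
`γ E(W, 0)`.
-/

open scoped RealInnerProductSpace

section ChangeOfVariables

variable {E F : Type*} [NormedAddCommGroup E] [NormedSpace ℝ E] [FiniteDimensional ℝ E]
  [MeasurableSpace E] [BorelSpace E] [NormedAddCommGroup F] [NormedSpace ℝ F]

lemma integral_comp_linearMap (μ : Measure E) [μ.IsAddHaarMeasure] {L : E →ₗ[ℝ] E}
    (hL : LinearMap.det L ≠ 0) (f : E → F) :
    ∫ x, f (L x) ∂μ = |(LinearMap.det L)⁻¹| • ∫ x, f x ∂μ := by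
  have hemb : MeasurableEmbedding L :=
    (LinearMap.equivOfDetNeZero L hL).toContinuousLinearEquiv.toHomeomorph.measurableEmbedding
  rw [← hemb.integral_map, Measure.map_linearMap_addHaar_eq_smul_addHaar μ hL,
    integral_smul_measure, ENNReal.toReal_ofReal (abs_nonneg _)]

end ChangeOfVariables

/-- Radial functions: the value at a point depends only on its distance to the origin. -/
def IsRadial {E : Type*} [Norm E] (f : E → ℝ) : Prop :=
  ∀ ⦃x y : E⦄, ‖x‖ = ‖y‖ → f x = f y

section Gradient

variable {E : Type*} [NormedAddCommGroup E] [InnerProductSpace ℝ E] [CompleteSpace E]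

lemma gradient_comp_continuousLinearMap {f : E → ℝ} (L : E →L[ℝ] E) {x : E}
    (hf : DifferentiableAt ℝ f (L x)) :
    gradient (f ∘ L) x = ContinuousLinearMap.adjoint L (gradient f (L x)) := by
  refine ext_inner_right ℝ fun y => ?_
  rw [inner_gradient_left, ContinuousLinearMap.adjoint_inner_left, inner_gradient_left,
    fderiv_comp x hf L.differentiableAt, L.fderiv, ContinuousLinearMap.comp_apply]

lemma hasDerivAt_comp_sub_smul {f : E → ℝ} {x v : E} {t : ℝ}
    (hf : DifferentiableAt ℝ f (x - t • v)) :
    HasDerivAt (fun s : ℝ => f (x - s • v)) (-⟪v, gradient f (x - t • v)⟫) t := by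
  have hline : HasDerivAt (fun s : ℝ => x - s • v) (-v) t := by
    simpa using ((hasDerivAt_id t).smul_const v).const_sub x
  rw [real_inner_comm, ← inner_neg_right, inner_gradient_left]
  exact hf.hasFDerivAt.comp_hasDerivAt t hline

lemma IsRadial.gradient_map {f : E → ℝ} (hf : IsRadial f) (hd : Differentiable ℝ f)
    (R : E ≃ₗᵢ[ℝ] E) (x : E) : gradient f (R x) = R (gradient f x) := by
  have hcomp : f ∘ (R : E →L[ℝ] E) = f := funext fun y => hf (R.norm_map y)
  have h := gradient_comp_continuousLinearMap (R : E →L[ℝ] E) (hd (R x))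
  rw [hcomp, LinearIsometryEquiv.adjoint_eq_symm] at h
  simp [h]

end Gradient

section EquivariantField

variable {E : Type*} [NormedAddCommGroup E] [InnerProductSpace ℝ E] [FiniteDimensional ℝ E]
  [MeasurableSpace E] [BorelSpace E] {v : E → E}

lemma map_integral_inner_smul_of_equivariant (hv : ∀ (R : E ≃ₗᵢ[ℝ] E) x, v (R x) = R (v x))
    (R : E ≃ₗᵢ[ℝ] E) (a : E) :
    R (∫ x, ⟪a, v x⟫ • v x) = ∫ x, ⟪R a, v x⟫ • v x :=
  calc R (∫ x, ⟪a, v x⟫ • v x)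
      = ∫ x, R (⟪a, v x⟫ • v x) := (R.toLinearIsometry.integral_comp_comm _).symm
    _ = ∫ x, ⟪R a, v (R x)⟫ • v (R x) := by simp only [map_smul, hv, R.inner_map_map]
    _ = ∫ x, ⟪R a, v x⟫ • v x :=
      R.measurePreserving.integral_comp R.toHomeomorph.measurableEmbedding
        fun x => ⟪R a, v x⟫ • v x

lemma integral_inner_sq_eq_of_norm_eq_of_equivariant
    (hv : ∀ (R : E ≃ₗᵢ[ℝ] E) x, v (R x) = R (v x)) {a b : E} (hab : ‖a‖ = ‖b‖) :
    ∫ x, ⟪a, v x⟫ ^ 2 = ∫ x, ⟪b, v x⟫ ^ 2 := by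
  let R : E ≃ₗᵢ[ℝ] E := (ℝ ∙ (a - b))ᗮ.reflection
  have hRa : R a = b := Submodule.reflection_sub hab
  calc ∫ x, ⟪a, v x⟫ ^ 2
      = ∫ x, ⟪b, v (R x)⟫ ^ 2 := by simp only [hv, ← hRa, R.inner_map_map]
    _ = ∫ x, ⟪b, v x⟫ ^ 2 :=
      R.measurePreserving.integral_comp R.toHomeomorph.measurableEmbedding
        fun x => ⟪b, v x⟫ ^ 2

lemma integral_inner_sq_of_equivariant (hv : ∀ (R : E ≃ₗᵢ[ℝ] E) x, v (R x) = R (v x))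
    (hL2 : MemLp v 2) {e : E} (he : ‖e‖ = 1) :
    ∫ x, ⟪e, v x⟫ ^ 2 = (∫ x, ‖v x‖ ^ 2) / Module.finrank ℝ E := by
  have : Nontrivial E := ⟨e, 0, norm_ne_zero_iff.1 (by simp [he])⟩
  have hn : (Module.finrank ℝ E : ℝ) ≠ 0 := Nat.cast_ne_zero.2 Module.finrank_pos.ne'
  let b := stdOrthonormalBasis ℝ E
  have hsum : ∫ x, ‖v x‖ ^ 2 = Module.finrank ℝ E * ∫ x, ⟪e, v x⟫ ^ 2 :=
    calc ∫ x, ‖v x‖ ^ 2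
        = ∫ x, ∑ i, ⟪b i, v x⟫ ^ 2 := by simp only [b.sum_sq_inner_right]
      _ = ∑ i, ∫ x, ⟪b i, v x⟫ ^ 2 :=
        integral_finsetSum _ fun i _ => (hL2.const_inner (b i)).integrable_sq
      _ = ∑ _i : Fin (Module.finrank ℝ E), ∫ x, ⟪e, v x⟫ ^ 2 :=
        Finset.sum_congr rfl fun i _ =>
          integral_inner_sq_eq_of_norm_eq_of_equivariant hv (by rw [b.norm_eq_one, he])
      _ = Module.finrank ℝ E * ∫ x, ⟪e, v x⟫ ^ 2 := by simp
  rw [hsum, mul_div_cancel_left₀ _ hn]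

lemma integral_inner_smul_of_equivariant (hv : ∀ (R : E ≃ₗᵢ[ℝ] E) x, v (R x) = R (v x))
    (hL2 : MemLp v 2) {e : E} (he : ‖e‖ = 1) :
    ∫ x, ⟪e, v x⟫ • v x = ((∫ x, ‖v x‖ ^ 2) / Module.finrank ℝ E) • e := by
  set M := ∫ x, ⟪e, v x⟫ • v x with hM
  have hint : Integrable fun x => ⟪e, v x⟫ • v x :=
    memLp_one_iff_integrable.1 (hL2.smul (hL2.const_inner e))
  -- `M` is fixed by the reflection in the line spanned by `e`, hence lies on that line.
  have hmem : M ∈ ℝ ∙ e := by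
    rw [← Submodule.reflection_eq_self_iff, hM, map_integral_inner_smul_of_equivariant hv,
      Submodule.reflection_mem_subspace_eq_self (Submodule.mem_span_singleton_self e)]
  obtain ⟨m, hm⟩ := Submodule.mem_span_singleton.1 hmem
  have hcoef : m = ∫ x, ⟪e, v x⟫ ^ 2 :=
    calc m = ⟪e, M⟫ := by simp [← hm, inner_smul_right, he]
      _ = ∫ x, ⟪e, ⟪e, v x⟫ • v x⟫ := (integral_inner hint e).symm
      _ = ∫ x, ⟪e, v x⟫ ^ 2 := by simp only [inner_smul_right, sq]
  rw [← hm, hcoef, integral_inner_sq_of_equivariant hv hL2 he]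

end EquivariantField

section AxialDilation

variable {E : Type*} [NormedAddCommGroup E] [InnerProductSpace ℝ E]

/-- For a unit vector `e`, the linear map that multiplies the component along `e` by `γ` and fixes
the orthogonal complement of `e`. With `γ` the Lorentz factor it turns a static profile into the
initial position of the travelling wave. -/
def axialDilation (e : E) (γ : ℝ) : E →L[ℝ] E :=
  1 + (γ - 1) • InnerProductSpace.rankOne ℝ e e

lemma axialDilation_apply (e : E) (γ : ℝ) (x : E) :
    axialDilation e γ x = x + ((γ - 1) * ⟪e, x⟫) • e := by
  simp [axialDilation, smul_smul]

lemma inner_axialDilation {e : E} (he : ‖e‖ = 1) (γ : ℝ) (x : E) :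
    ⟪e, axialDilation e γ x⟫ = γ * ⟪e, x⟫ := by
  simp only [axialDilation_apply, inner_add_right, inner_smul_right, real_inner_self_eq_norm_sq, he]
  ring

lemma axialDilation_self {e : E} (he : ‖e‖ = 1) (γ : ℝ) : axialDilation e γ e = γ • e := by
  simp only [axialDilation_apply, real_inner_self_eq_norm_sq, he]
  module

lemma norm_axialDilation_sq {e : E} (he : ‖e‖ = 1) (γ : ℝ) (x : E) :
    ‖axialDilation e γ x‖ ^ 2 = ‖x‖ ^ 2 + (γ ^ 2 - 1) * ⟪e, x⟫ ^ 2 := by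
  rw [axialDilation_apply, norm_add_sq_real, inner_smul_right, norm_smul, he, mul_one,
    Real.norm_eq_abs, sq_abs, real_inner_comm]
  ring

variable [FiniteDimensional ℝ E]

lemma adjoint_axialDilation (e : E) (γ : ℝ) :
    ContinuousLinearMap.adjoint (axialDilation e γ) = axialDilation e γ := by
  simp [axialDilation, ContinuousLinearMap.one_def, ContinuousLinearMap.adjoint_id]

lemma det_axialDilation {e : E} (he : ‖e‖ = 1) (γ : ℝ) :
    LinearMap.det (axialDilation e γ : E →ₗ[ℝ] E) = γ := by
  have h : (axialDilation e γ : E →ₗ[ℝ] E)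
      = LinearMap.transvection ((γ - 1) • (innerSL ℝ e : E →ₗ[ℝ] ℝ)) e := by
    ext x
    simp [axialDilation_apply, LinearMap.transvection.apply]
  rw [h, LinearMap.transvection.det]
  simp [he]

lemma gradient_comp_axialDilation {u : E → ℝ} (hu : Differentiable ℝ u) (e : E) (γ : ℝ) (x : E) :
    gradient (u ∘ axialDilation e γ) x
      = axialDilation e γ (gradient u (axialDilation e γ x)) := by
  rw [gradient_comp_continuousLinearMap _ (hu _), adjoint_axialDilation]

variable [MeasurableSpace E] [BorelSpace E]

lemma integral_comp_axialDilation {F : Type*} [NormedAddCommGroup F] [NormedSpace ℝ F] {e : E}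
    (he : ‖e‖ = 1) {γ : ℝ} (hγ : 0 < γ) (f : E → F) :
    ∫ x, f (axialDilation e γ x) = γ⁻¹ • ∫ x, f x := by
  have hdet := det_axialDilation he γ
  have h := integral_comp_linearMap volume (L := (axialDilation e γ : E →ₗ[ℝ] E))
    (by rw [hdet]; exact hγ.ne') f
  rwa [hdet, abs_of_pos (inv_pos.2 hγ)] at h

variable {u : E → ℝ} (hrad : IsRadial u) (hdiff : Differentiable ℝ u) (hL2 : MemLp (gradient u) 2)
  {e : E} (he : ‖e‖ = 1) {γ : ℝ} (hγ : 0 < γ)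
include hrad hdiff hL2 he hγ

lemma integral_inner_gradient_comp_axialDilation_smul :
    ∫ x, ⟪e, gradient (u ∘ axialDilation e γ) x⟫ • gradient (u ∘ axialDilation e γ) x
      = (γ * ((∫ x, ‖gradient u x‖ ^ 2) / Module.finrank ℝ E)) • e := by
  have hint : Integrable fun x => ⟪e, gradient u x⟫ • gradient u x :=
    memLp_one_iff_integrable.1 (hL2.smul (hL2.const_inner e))
  simp only [gradient_comp_axialDilation hdiff]
  rw [integral_comp_axialDilation he hγ
    fun y => ⟪e, axialDilation e γ (gradient u y)⟫ • axialDilation e γ (gradient u y)]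
  simp only [inner_axialDilation he, mul_smul, ← map_smul]
  rw [ContinuousLinearMap.integral_comp_comm _ (hint.fun_smul γ), integral_smul,
    integral_inner_smul_of_equivariant (hrad.gradient_map hdiff) hL2 he]
  simp only [map_smul, axialDilation_self he, smul_smul]
  congr 1
  field_simp

lemma integral_inner_gradient_comp_axialDilation_sq :
    ∫ x, ⟪e, gradient (u ∘ axialDilation e γ) x⟫ ^ 2
      = γ * ((∫ x, ‖gradient u x‖ ^ 2) / Module.finrank ℝ E) := by
  simp only [gradient_comp_axialDilation hdiff, inner_axialDilation he, mul_pow]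
  rw [integral_const_mul, integral_comp_axialDilation he hγ fun y => ⟪e, gradient u y⟫ ^ 2,
    integral_inner_sq_of_equivariant (hrad.gradient_map hdiff) hL2 he, smul_eq_mul]
  field_simp

lemma integral_norm_gradient_comp_axialDilation_sq :
    ∫ x, ‖gradient (u ∘ axialDilation e γ) x‖ ^ 2
      = γ⁻¹ * (1 + (γ ^ 2 - 1) / Module.finrank ℝ E) * ∫ x, ‖gradient u x‖ ^ 2 := by
  simp only [gradient_comp_axialDilation hdiff, norm_axialDilation_sq he]
  rw [integral_comp_axialDilation he hγ
    fun y => ‖gradient u y‖ ^ 2 + (γ ^ 2 - 1) * ⟪e, gradient u y⟫ ^ 2,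
    integral_add (hL2.integrable_norm_pow two_ne_zero)
      ((hL2.const_inner e).integrable_sq.const_mul _),
    integral_const_mul, integral_inner_sq_of_equivariant (hrad.gradient_map hdiff) hL2 he,
    smul_eq_mul]
  ring

end AxialDilation

section RadialIntegrals

variable {E : Type*} [NormedAddCommGroup E] [NormedSpace ℝ E] [FiniteDimensional ℝ E]
  [MeasurableSpace E] [BorelSpace E] (μ : Measure E) [μ.IsAddHaarMeasure]

-- The integrand is the divergence of the vector field `φ(‖x‖) x`.
lemma integral_radial_divergence_eq_zero [Nontrivial E] {φ φ' : ℝ → ℝ}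
    (hcont : ContinuousWithinAt φ (Ici 0) 0) (hderiv : ∀ r ∈ Ioi 0, HasDerivAt φ (φ' r) r)
    (hint : Integrable (fun x => Module.finrank ℝ E * φ ‖x‖ + ‖x‖ * φ' ‖x‖) μ)
    (hlim : Tendsto (fun r => r ^ Module.finrank ℝ E * φ r) atTop (nhds 0)) :
    ∫ x, Module.finrank ℝ E * φ ‖x‖ + ‖x‖ * φ' ‖x‖ ∂μ = 0 := by
  set n := Module.finrank ℝ E
  have hn0 : n ≠ 0 := Module.finrank_pos.ne'
  have hflux : ∀ r ∈ Ioi (0 : ℝ), HasDerivAt (fun r => r ^ n * φ r)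
      (r ^ (n - 1) • (n * φ r + r * φ' r)) r := fun r hr => by
    refine ((hasDerivAt_pow n r).mul (hderiv r hr)).congr_deriv ?_
    rw [← pow_sub_one_mul hn0 r, smul_eq_mul]
    ring
  rw [integral_fun_norm_addHaar μ fun r => n * φ r + r * φ' r,
    integral_Ioi_of_hasDerivAt_of_tendsto ((continuousWithinAt_id.pow n).mul hcont) hflux
      ((integrable_fun_norm_addHaar μ (f := fun r => n * φ r + r * φ' r)).1 hint) hlim]
  simp [hn0]

variable {c p : ℝ} (hc : 0 < c)
include hc

lemma one_add_sq_div_pos (r : ℝ) : 0 < 1 + r ^ 2 / c := by positivity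

lemma integrable_one_add_norm_sq_div_rpow_neg (hp : Module.finrank ℝ E < 2 * p) :
    Integrable (fun x => (1 + ‖x‖ ^ 2 / c) ^ (-p)) μ := by
  have h := (integrable_rpow_neg_one_add_norm_sq (μ := μ) hp).comp_smul
    (inv_ne_zero (Real.sqrt_pos.2 hc).ne')
  refine h.congr (Eventually.of_forall fun x => ?_)
  simp only [norm_smul, norm_inv, Real.norm_eq_abs, abs_of_nonneg (Real.sqrt_nonneg c), mul_pow,
    inv_pow, Real.sq_sqrt hc.le]
  congr 1 <;> ring

lemma integrable_norm_sq_mul_one_add_norm_sq_div_rpow_neg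
    (hp : Module.finrank ℝ E + 2 < 2 * p) :
    Integrable (fun x => ‖x‖ ^ 2 * (1 + ‖x‖ ^ 2 / c) ^ (-p)) μ := by
  have h := ((integrable_one_add_norm_sq_div_rpow_neg μ hc (p := p - 1) (by linarith)).sub
    (integrable_one_add_norm_sq_div_rpow_neg μ hc (p := p) (by linarith))).const_mul c
  refine h.congr (Eventually.of_forall fun x => ?_)
  have hQ := one_add_sq_div_pos hc ‖x‖
  simp only [Pi.sub_apply]
  rw [show -(p - 1) = -p + 1 by ring, Real.rpow_add_one hQ.ne']
  field_simp
  ring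

lemma hasDerivAt_one_add_sq_div_rpow (s r : ℝ) :
    HasDerivAt (fun r => (1 + r ^ 2 / c) ^ s) (2 * s / c * (1 + r ^ 2 / c) ^ (s - 1) * r) r := by
  have h := ((((hasDerivAt_id r).pow 2).div_const c).const_add 1).rpow_const (p := s)
    (Or.inl (one_add_sq_div_pos hc r).ne')
  refine h.congr_deriv ?_
  simp only [Pi.pow_apply, id]
  ring

lemma hasGradientAt_one_add_norm_sq_div_rpow {V : Type*} [NormedAddCommGroup V]
    [InnerProductSpace ℝ V] [CompleteSpace V] (s : ℝ) (x : V) :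
    HasGradientAt (fun y => (1 + ‖y‖ ^ 2 / c) ^ s)
      ((2 * s / c * (1 + ‖x‖ ^ 2 / c) ^ (s - 1)) • x) x := by
  have hbase : HasFDerivAt (fun y : V => 1 + ‖y‖ ^ 2 / c) (c⁻¹ • (2 • innerSL ℝ x)) x := by
    simpa only [div_eq_mul_inv] using
      ((hasStrictFDerivAt_norm_sq x).hasFDerivAt.mul_const c⁻¹).const_add 1
  have h := hbase.rpow_const (p := s) (Or.inl (one_add_sq_div_pos hc ‖x‖).ne')
  rw [hasGradientAt_iff_hasFDerivAt]
  refine h.congr_fderiv (ContinuousLinearMap.ext fun y => ?_)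
  simp only [smul_apply, innerSL_apply_apply, nsmul_eq_mul, Nat.cast_ofNat, smul_eq_mul, map_smul,
    InnerProductSpace.toDual_apply_apply]
  ring

lemma tendsto_pow_mul_one_add_sq_div_rpow {n : ℕ} {s : ℝ} (hs : n + 2 * s < 0) :
    Tendsto (fun r : ℝ => r ^ n * (1 + r ^ 2 / c) ^ s) atTop (nhds 0) := by
  have hs0 : s < 0 := by linarith [n.cast_nonneg (α := ℝ)]
  have hpow : Tendsto (fun r : ℝ => (c ^ s)⁻¹ * r ^ (n + 2 * s)) atTop (nhds 0) := by
    simpa using (tendsto_rpow_neg_atTop (neg_pos.2 hs)).const_mul (c ^ s)⁻¹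
  refine squeeze_zero' (eventually_gt_atTop 0 |>.mono fun r hr => by positivity)
    (eventually_gt_atTop 0 |>.mono fun r hr => ?_) hpow
  calc r ^ n * (1 + r ^ 2 / c) ^ s
      ≤ r ^ n * (r ^ 2 / c) ^ s := by
        gcongr ?_ * ?_
        exact Real.rpow_le_rpow_of_nonpos (by positivity) (by linarith) hs0.le
    _ = (c ^ s)⁻¹ * r ^ (n + 2 * s) := by
        rw [Real.div_rpow (by positivity) hc.le, Real.rpow_add hr, Real.rpow_natCast,
          Real.rpow_mul hr.le, Real.rpow_two]
        ring

lemma finrank_mul_integral_one_add_norm_sq_div_rpow_neg [Nontrivial E]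
    (hp : Module.finrank ℝ E + 2 < 2 * p) :
    Module.finrank ℝ E * ∫ x, (1 + ‖x‖ ^ 2 / c) ^ (-p) ∂μ
      = (2 * p - 2 - Module.finrank ℝ E) / c * ∫ x, ‖x‖ ^ 2 * (1 + ‖x‖ ^ 2 / c) ^ (-p) ∂μ := by
  set n : ℝ := (Module.finrank ℝ E : ℝ) with hn
  have hdiv : ∀ r : ℝ, n * (1 + r ^ 2 / c) ^ (1 - p)
      + r * (2 * (1 - p) / c * (1 + r ^ 2 / c) ^ (1 - p - 1) * r)
      = n * (1 + r ^ 2 / c) ^ (-p)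
        - (2 * p - 2 - n) / c * (r ^ 2 * (1 + r ^ 2 / c) ^ (-p)) := fun r => by
    have hQ := one_add_sq_div_pos hc r
    rw [show 1 - p - 1 = -p by ring, show 1 - p = -p + 1 by ring, Real.rpow_add_one hQ.ne']
    ring
  have hint₀ := (integrable_one_add_norm_sq_div_rpow_neg μ hc (p := p) (by linarith)).const_mul n
  have hint₂ := (integrable_norm_sq_mul_one_add_norm_sq_div_rpow_neg μ hc hp).const_mul
    ((2 * p - 2 - n) / c)
  have hzero := integral_radial_divergence_eq_zero μ
    (hasDerivAt_one_add_sq_div_rpow hc (1 - p) 0).continuousAt.continuousWithinAt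
    (fun r _ => hasDerivAt_one_add_sq_div_rpow hc (1 - p) r)
    (by simpa only [← hn, hdiv, Pi.sub_def] using hint₀.sub hint₂)
    (tendsto_pow_mul_one_add_sq_div_rpow hc (by linarith))
  simp only [← hn, hdiv] at hzero
  rw [integral_sub hint₀ hint₂, integral_const_mul, integral_const_mul] at hzero
  linarith

end RadialIntegrals

section GroundState

variable {N : ℕ}

lemma isRadial_W : IsRadial (W N) := fun x y h => by rw [W, W, h]

lemma natCast_mul_sub_two_pos (hN : 2 < N) : (0 : ℝ) < N * (N - 2) := by
  have hN' : (2 : ℝ) < N := by exact_mod_cast hN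
  exact mul_pos (by linarith) (by linarith)

lemma hasGradientAt_W (hN : 2 < N) (x : EuclideanSpace ℝ (Fin N)) :
    HasGradientAt (W N)
      (-(1 / N * (1 + ‖x‖ ^ 2 / (N * (N - 2))) ^ (-(N / 2 : ℝ))) • x) x := by
  have hN2 : (N : ℝ) - 2 ≠ 0 := sub_ne_zero.2 (by exact_mod_cast hN.ne')
  convert! hasGradientAt_one_add_norm_sq_div_rpow (natCast_mul_sub_two_pos hN)
    (-(((N : ℝ) - 2) / 2)) x using 2
  rw [show -(((N : ℝ) - 2) / 2) - 1 = -(N / 2) by ring]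
  generalize (1 + ‖x‖ ^ 2 / (N * (N - 2) : ℝ)) ^ (-(N / 2 : ℝ)) = q
  field_simp

lemma differentiable_W (hN : 2 < N) : Differentiable ℝ (W N) := fun x =>
  (hasGradientAt_W hN x).differentiableAt

lemma norm_gradient_W_sq (hN : 2 < N) (x : EuclideanSpace ℝ (Fin N)) :
    ‖gradient (W N) x‖ ^ 2
      = 1 / N ^ 2 * (‖x‖ ^ 2 * (1 + ‖x‖ ^ 2 / (N * (N - 2))) ^ (-N : ℝ)) := by
  have hQ := one_add_sq_div_pos (natCast_mul_sub_two_pos hN) ‖x‖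
  have hsq : ((1 + ‖x‖ ^ 2 / (N * (N - 2))) ^ (-(N / 2 : ℝ))) ^ 2
      = (1 + ‖x‖ ^ 2 / (N * (N - 2))) ^ (-N : ℝ) := by
    rw [← Real.rpow_mul_natCast hQ.le]
    congr 1
    push_cast
    ring
  rw [(hasGradientAt_W hN x).gradient, norm_smul, mul_pow, Real.norm_eq_abs, sq_abs, neg_sq,
    mul_pow, hsq]
  ring

lemma abs_W_rpow (hN : 2 < N) (x : EuclideanSpace ℝ (Fin N)) :
    |W N x| ^ (2 * N / (N - 2) : ℝ) = (1 + ‖x‖ ^ 2 / (N * (N - 2))) ^ (-N : ℝ) := by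
  have hN2 : (N : ℝ) - 2 ≠ 0 := sub_ne_zero.2 (by exact_mod_cast hN.ne')
  have hQ := one_add_sq_div_pos (natCast_mul_sub_two_pos hN) ‖x‖
  rw [W, abs_of_pos (Real.rpow_pos_of_pos hQ _), ← Real.rpow_mul hQ.le]
  congr 1
  field_simp

lemma memLp_gradient_W (hN : 2 < N) : MemLp (gradient (W N)) 2 := by
  have hN' : (2 : ℝ) < N := by exact_mod_cast hN
  have hmeas : AEStronglyMeasurable (gradient (W N)) := by
    refine Measurable.aestronglyMeasurable ?_
    rw [gradient_eq (hasGradientAt_W hN)]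
    fun_prop
  rw [memLp_two_iff_integrable_sq_norm hmeas]
  simp only [norm_gradient_W_sq hN]
  exact (integrable_norm_sq_mul_one_add_norm_sq_div_rpow_neg volume (natCast_mul_sub_two_pos hN)
    (by rw [finrank_euclideanSpace_fin]; linarith)).const_mul _

lemma pohozaev_W (hN : 2 < N) :
    ∫ x, |W N x| ^ (2 * N / (N - 2) : ℝ) = ∫ x, ‖gradient (W N) x‖ ^ 2 := by
  have hN' : (2 : ℝ) < N := by exact_mod_cast hN
  have hN2 : (N : ℝ) - 2 ≠ 0 := by linarith
  have : Nonempty (Fin N) := ⟨⟨0, by omega⟩⟩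
  have h := finrank_mul_integral_one_add_norm_sq_div_rpow_neg
    (volume : Measure (EuclideanSpace ℝ (Fin N))) (natCast_mul_sub_two_pos hN) (p := N)
    (by rw [finrank_euclideanSpace_fin]; linarith)
  rw [finrank_euclideanSpace_fin,
    show (2 * (N : ℝ) - 2 - N) / (N * (N - 2)) = 1 / N by field_simp; ring] at h
  simp only [abs_W_rpow hN, norm_gradient_W_sq hN]
  rw [integral_const_mul, sq, ← one_div_mul_one_div, mul_assoc, ← h]
  field_simp

end GroundState

/-- The Lorentz factor `γ` of a wave travelling at speed `ℓ` in units of the speed of light. -/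
def lorentzFactor (ℓ : ℝ) : ℝ :=
  (√(1 - ℓ ^ 2))⁻¹

section LorentzFactor

variable {ℓ : ℝ} (hℓ : ℓ ∈ Ioo (-1 : ℝ) 1)
include hℓ

lemma one_sub_sq_pos_of_mem_Ioo : 0 < 1 - ℓ ^ 2 := by nlinarith [hℓ.1, hℓ.2]

lemma lorentzFactor_pos : 0 < lorentzFactor ℓ :=
  inv_pos.2 (Real.sqrt_pos.2 (one_sub_sq_pos_of_mem_Ioo hℓ))

lemma lorentzFactor_sq : lorentzFactor ℓ ^ 2 = (1 - ℓ ^ 2)⁻¹ := by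
  rw [lorentzFactor, inv_pow, Real.sq_sqrt (one_sub_sq_pos_of_mem_Ioo hℓ).le]

end LorentzFactor

section LorentzBoost

variable {N : ℕ} {u : EuclideanSpace ℝ (Fin N) → ℝ}

lemma ne_zero_of_norm_eq_one {e : EuclideanSpace ℝ (Fin N)} (he : ‖e‖ = 1) : N ≠ 0 := by
  rintro rfl
  simp [Subsingleton.elim e 0] at he

lemma energy_zero_right_of_pohozaev (hN : N ≠ 0)
    (hu : ∫ x, |u x| ^ (2 * N / (N - 2) : ℝ) = ∫ x, ‖gradient u x‖ ^ 2) :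
    energy N u 0 = (∫ x, ‖gradient u x‖ ^ 2) / N := by
  simp only [energy, hu, Pi.zero_apply, zero_pow two_ne_zero, integral_zero, mul_zero, zero_add]
  field_simp
  ring

variable {ℓ : ℝ} {e : EuclideanSpace ℝ (Fin N)} (hrad : IsRadial u) (hdiff : Differentiable ℝ u)
  (hL2 : MemLp (gradient u) 2)
  (hu : ∫ x, |u x| ^ (2 * N / (N - 2) : ℝ) = ∫ x, ‖gradient u x‖ ^ 2)
  (he : ‖e‖ = 1) (hℓ : ℓ ∈ Ioo (-1 : ℝ) 1)
include hrad hdiff hL2 hu he hℓ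

lemma momentum_comp_axialDilation :
    ∫ x, (-ℓ * ⟪e, gradient (u ∘ axialDilation e (lorentzFactor ℓ)) x⟫)
        • gradient (u ∘ axialDilation e (lorentzFactor ℓ)) x
      = (-(ℓ * lorentzFactor ℓ) * energy N u 0) • e := by
  have hN := ne_zero_of_norm_eq_one he
  simp only [mul_smul _ ⟪e, _⟫]
  rw [integral_smul, integral_inner_gradient_comp_axialDilation_smul hrad hdiff hL2 he
    (lorentzFactor_pos hℓ), energy_zero_right_of_pohozaev hN hu, finrank_euclideanSpace_fin,
    smul_smul]
  congr 1
  ring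

lemma energy_comp_axialDilation :
    energy N (u ∘ axialDilation e (lorentzFactor ℓ))
        (fun x => -ℓ * ⟪e, gradient (u ∘ axialDilation e (lorentzFactor ℓ)) x⟫)
      = lorentzFactor ℓ * energy N u 0 := by
  have hN := ne_zero_of_norm_eq_one he
  have hγ := lorentzFactor_pos hℓ
  have hℓγ : ℓ ^ 2 = 1 - (lorentzFactor ℓ ^ 2)⁻¹ := by
    rw [lorentzFactor_sq hℓ, inv_inv]
    ring
  have hpot : ∫ x, |(u ∘ axialDilation e (lorentzFactor ℓ)) x| ^ (2 * N / (N - 2) : ℝ)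
      = (lorentzFactor ℓ)⁻¹ * ∫ x, ‖gradient u x‖ ^ 2 := by
    rw [← hu]
    exact integral_comp_axialDilation he hγ fun y => |u y| ^ (2 * N / (N - 2) : ℝ)
  rw [energy_zero_right_of_pohozaev hN hu]
  simp only [energy, mul_pow, neg_sq]
  rw [integral_const_mul, integral_inner_gradient_comp_axialDilation_sq hrad hdiff hL2 he hγ,
    integral_norm_gradient_comp_axialDilation_sq hrad hdiff hL2 he hγ, hpot,
    finrank_euclideanSpace_fin, hℓγ]
  field_simp
  ring

end LorentzBoost

section SolitaryWave

variable {N : ℕ} {ℓ : ℝ}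

lemma firstCoord_eq_inner (hN : 0 < N) (x : EuclideanSpace ℝ (Fin N)) :
    firstCoord x = ⟪EuclideanSpace.single (⟨0, hN⟩ : Fin N) (1 : ℝ), x⟫ := by
  simp [firstCoord, hN, EuclideanSpace.inner_single_left]

lemma Wl_eq_W_axialDilation (hN : 0 < N) (hℓ : ℓ ∈ Ioo (-1 : ℝ) 1) (t : ℝ)
    (x : EuclideanSpace ℝ (Fin N)) :
    Wl N ℓ t x = W N (axialDilation (EuclideanSpace.single ⟨0, hN⟩ 1) (lorentzFactor ℓ)
      (x - t • ℓ • EuclideanSpace.single ⟨0, hN⟩ 1)) := by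
  set e : EuclideanSpace ℝ (Fin N) := EuclideanSpace.single ⟨0, hN⟩ 1
  have he : ‖e‖ = 1 := by simp [e]
  have hl := (one_sub_sq_pos_of_mem_Ioo hℓ).ne'
  rw [Wl, W, norm_axialDilation_sq he, lorentzFactor_sq hℓ, smul_smul, norm_sub_sq_real,
    inner_sub_right, inner_smul_right, inner_smul_right, norm_smul, real_inner_self_eq_norm_sq,
    he, real_inner_comm, ← firstCoord_eq_inner, mul_one, Real.norm_eq_abs, sq_abs]
  congr 1
  field_simp
  ring

lemma Wl_zero (hN : 0 < N) (hℓ : ℓ ∈ Ioo (-1 : ℝ) 1) :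
    Wl N ℓ 0 = W N ∘ axialDilation (EuclideanSpace.single ⟨0, hN⟩ 1) (lorentzFactor ℓ) := by
  funext x
  rw [Wl_eq_W_axialDilation hN hℓ, zero_smul, sub_zero, Function.comp_apply]

lemma dtWl_zero (hN : 2 < N) (hℓ : ℓ ∈ Ioo (-1 : ℝ) 1) :
    dtWl N ℓ 0 = fun x =>
      -ℓ * ⟪EuclideanSpace.single ⟨0, by omega⟩ 1, gradient (Wl N ℓ 0) x⟫ := by
  set e : EuclideanSpace ℝ (Fin N) := EuclideanSpace.single ⟨0, by omega⟩ 1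
  funext x
  have htravel : (fun s => Wl N ℓ s x) = fun s => Wl N ℓ 0 (x - s • ℓ • e) := by
    funext s
    rw [Wl_zero (by omega) hℓ, Wl_eq_W_axialDilation (by omega) hℓ, Function.comp_apply]
  have hdiff : Differentiable ℝ (Wl N ℓ 0) := by
    rw [Wl_zero (by omega) hℓ]
    exact (differentiable_W hN).comp (axialDilation e (lorentzFactor ℓ)).differentiable
  rw [dtWl, htravel, (hasDerivAt_comp_sub_smul (hdiff _)).deriv, zero_smul, sub_zero,
    real_inner_smul_left, neg_mul]

end SolitaryWave

theorem stmt5_general (N : ℕ) (hN : 3 ≤ N)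
    (ℓ : ℝ) (hℓ : ℓ ∈ Set.Ioo (-1 : ℝ) 1) :
    (∫ x, dtWl N ℓ 0 x • gradient (Wl N ℓ 0) x)
        = (-(ℓ / Real.sqrt (1 - ℓ ^ 2)) * energy N (W N) 0)
            • EuclideanSpace.single (⟨0, by omega⟩ : Fin N) (1 : ℝ)
      ∧ (∫ x, dtWl N ℓ 0 x • gradient (Wl N ℓ 0) x)
        = (-ℓ * energy N (Wl N ℓ 0) (dtWl N ℓ 0))
            • EuclideanSpace.single (⟨0, by omega⟩ : Fin N) (1 : ℝ) := by
  set e : EuclideanSpace ℝ (Fin N) := EuclideanSpace.single ⟨0, by omega⟩ 1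
  have he : ‖e‖ = 1 := by simp [e]
  have hmomentum := momentum_comp_axialDilation isRadial_W (differentiable_W hN)
    (memLp_gradient_W hN) (pohozaev_W hN) he hℓ
  have henergy := energy_comp_axialDilation isRadial_W (differentiable_W hN)
    (memLp_gradient_W hN) (pohozaev_W hN) he hℓ
  rw [dtWl_zero hN hℓ, Wl_zero (by omega) hℓ, hmomentum, henergy]
  exact ⟨by rw [lorentzFactor, div_eq_mul_inv], by rw [neg_mul, neg_mul, mul_assoc]⟩

/-- Claim 2.3, fourth line: the momentum of the solitary wave `W_ℓ`. -/
theorem stmt5 (N : ℕ) (hN : N = 3 ∨ N = 4 ∨ N = 5)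
    (ℓ : ℝ) (hℓ : ℓ ∈ Set.Ioo (-1 : ℝ) 1) :
    (∫ x, dtWl N ℓ 0 x • gradient (Wl N ℓ 0) x)
        = (-(ℓ / Real.sqrt (1 - ℓ ^ 2)) * energy N (W N) 0)
            • EuclideanSpace.single (⟨0, by omega⟩ : Fin N) (1 : ℝ)
      ∧ (∫ x, dtWl N ℓ 0 x • gradient (Wl N ℓ 0) x)
        = (-ℓ * energy N (Wl N ℓ 0) (dtWl N ℓ 0))
            • EuclideanSpace.single (⟨0, by omega⟩ : Fin N) (1 : ℝ) :=
  stmt5_general N (by omega) ℓ hℓ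

end
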